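/- Let f be a cellular automaton on A^ℤ. If the restriction of f to ω̃(f) equals the restriction of a shift map σ^n with n ∈ ℤ, n ≠ 0, then ω̃(f) is a chain transitive subshift. -/

import Mathlib

open Filter Set Function

namespace Gls

variable {A : Type*}

/-- The left shift map on `A^ℤ`. -/
def shift (x : ℤ → A) : ℤ → A := fun i => x (i + 1)

/-- A cellular automaton: a continuous shift-commuting self-map of the full shift. -/
def IsCA [TopologicalSpace A] (f : (ℤ → A) → (ℤ → A)) : Prop :=
  Continuous f ∧ f ∘ shift = shift ∘ f

/-- The set of limit points of the forward orbit of `x` under `f`. -/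
def omegaSet [TopologicalSpace A] (f : (ℤ → A) → (ℤ → A)) (x : ℤ → A) : Set (ℤ → A) :=
  {y | MapClusterPt y atTop fun t => f^[t] x}

/-- The realm of attraction of `Y`. -/
def realm [TopologicalSpace A] (f : (ℤ → A) → (ℤ → A)) (Y : Set (ℤ → A)) : Set (ℤ → A) :=
  {x | omegaSet f x ⊆ Y}

/-- The generic limit set: the intersection of all closed sets whose realm is comeager. -/
def genLimitSet [TopologicalSpace A] (f : (ℤ → A) → (ℤ → A)) : Set (ℤ → A) :=
  ⋂₀ {C | IsClosed C ∧ realm f C ∈ residual (ℤ → A)}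

/-- The word `x_{[i, i+n)}` of length `n` read in the configuration `x` from position `i`. -/
def word (x : ℤ → A) (i : ℤ) (n : ℕ) : List A :=
  (List.range n).map fun k => x (i + k)

/-- The cylinder set `[w]_i`. -/
def cylinder (w : List A) (i : ℤ) : Set (ℤ → A) := {x | word x i w.length = w}

/-- The language of `X`: all finite words occurring in points of `X`. -/
def lang (X : Set (ℤ → A)) : Set (List A) :=
  {w | ∃ x ∈ X, ∃ i : ℤ, word x i w.length = w}


/-- A subshift `Y` is transitive if any two words of its language can be joined. -/
def IsTransitiveSubshift {A : Type*} (Y : Set (ℤ → A)) : Prop :=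
  ∀ u ∈ lang Y, ∀ v ∈ lang Y, ∃ w : List A, u ++ w ++ v ∈ lang Y

/-- The order-`n` SFT approximation of `X`: forbid all words of length `n` not in `L_n(X)`. -/
def sftApprox {A : Type*} (X : Set (ℤ → A)) (n : ℕ) : Set (ℤ → A) :=
  {x | ∀ i : ℤ, word x i n ∈ lang X}

/-- `X` is chain transitive if every SFT approximation of `X` is transitive. -/
def ChainTransitive {A : Type*} (X : Set (ℤ → A)) : Prop :=
  ∀ n : ℕ, IsTransitiveSubshift (sftApprox X n)

/-- The (two-sided) shift by `n ∈ ℤ`: `σ^n(x)_i = x_{i+n}`. -/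
def shiftZ {A : Type*} (n : ℤ) (x : ℤ → A) : ℤ → A := fun i => x (i + n)

/-!
Write `X` for the generic limit set. The set of points whose orbit enters a given neighbourhood of
a point of `X` infinitely often is non-meagre and has the property of Baire, and the full shift is
topologically mixing. Hence for words `u` and `v` of `X` one generic point `x` sees `u` at some
position `i` infinitely often and `v` at some position `j ≥ i` infinitely often. Since
`f^t(x)` converges to `X`, any fixed window of `f^t(x)` eventually contains only words of `X`, so
reading it from left to right gives a path in every SFT approximation of `X`. Moreover the word at
`i` in `f^{t+1}(x)` is eventually the word at `i + n` in `f^t(x)`: if `n > 0`, the word at `i` at a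
time leads to the words at `i` at all later times, and if `n < 0`, at all earlier times. In either
case one chooses an occurrence of `u` at time `s` and one of `v` at time `t` in the suitable order,
goes from `u` to the word at `i` at time `t`, and then to the right to `v`.
-/

section General

open scoped Topology

theorem exists_rel_of_eventually_rel_succ {α : Type*} (r : α → α → Prop) [IsTrans α r] {w : ℕ → α}
    (hr : ∀ᶠ t in atTop, r (w t) (w (t + 1))) {P Q : ℕ → Prop} (hP : ∃ᶠ t in atTop, P t)
    (hQ : ∃ᶠ t in atTop, Q t) : ∃ s t, P s ∧ Q t ∧ r (w s) (w t) := by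
  obtain ⟨T, hT⟩ := eventually_atTop.1 hr
  obtain ⟨s, hs, hPs⟩ := frequently_atTop.1 hP T
  obtain ⟨t, ht, hQt⟩ := frequently_atTop'.1 hQ s
  exact ⟨s, t, hPs, hQt, Nat.rel_of_forall_rel_succ_of_le_of_lt r hT hs ht⟩

theorem exists_countable_sInter_eq_of_isClosed {Y : Type*} [TopologicalSpace Y]
    [SecondCountableTopology Y] (S : Set (Set Y)) (hS : ∀ C ∈ S, IsClosed C) :
    ∃ T ⊆ S, T.Countable ∧ ⋂₀ T = ⋂₀ S := by
  obtain ⟨T, hTS, hT, hunion⟩ :=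
    TopologicalSpace.isOpen_biUnion_countable S compl fun C hC => (hS C hC).isOpen_compl
  refine ⟨T, hTS, hT, compl_injective ?_⟩
  simpa only [sInter_eq_biInter, compl_iInter] using hunion

theorem exists_isOpen_nonempty_residualEq {Y : Type*} [TopologicalSpace Y] {S : Set Y}
    (hS : BaireMeasurableSet S) (hne : ¬ IsMeagre S) : ∃ O, IsOpen O ∧ O.Nonempty ∧ S =ᵇ O := by
  obtain ⟨O, hO, hSO⟩ := hS.residualEq_isOpen
  refine ⟨O, hO, nonempty_iff_ne_empty.2 ?_, hSO⟩
  rintro rfl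
  exact hne (eventuallyEq_empty.1 hSO)

theorem baireMeasurableSet_setOf_frequently_iterate_mem {Y : Type*} [TopologicalSpace Y]
    {f : Y → Y} (hf : Continuous f) {U : Set Y} (hU : IsOpen U) :
    BaireMeasurableSet {x | ∃ᶠ t in atTop, f^[t] x ∈ U} := by
  borelize Y
  have h : MeasurableSet (limsup (fun t => f^[t] ⁻¹' U) atTop) :=
    .measurableSet_limsup fun t => (hU.preimage (hf.iterate t)).measurableSet
  convert h.baireMeasurableSet using 1
  ext x
  simp only [mem_limsup_iff_frequently_mem, mem_ofPred_eq, mem_preimage]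

end General

section Words

theorem word_eq_ofFn (x : ℤ → A) (i : ℤ) (l : ℕ) :
    word x i l = List.ofFn fun k : Fin l => x (i + k) := by
  -- `word` coerces `List.range l` to a `List ℤ` through the list monad.
  simp only [word, List.pure_def, List.bind_eq_flatMap, ← List.map_eq_flatMap, List.map_map,
    List.ofFn_eq_map]
  rw [← List.map_coe_finRange_eq_range, List.map_map]
  rfl

theorem length_word (x : ℤ → A) (i : ℤ) (l : ℕ) : (word x i l).length = l := by
  rw [word_eq_ofFn, List.length_ofFn]

theorem word_eq_word_iff {x y : ℤ → A} {i j : ℤ} {l : ℕ} :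
    word x i l = word y j l ↔ ∀ k : ℕ, k < l → x (i + k) = y (j + k) := by
  simp only [word_eq_ofFn, List.ofFn_inj, funext_iff, Fin.forall_iff]

theorem word_shiftZ (n : ℤ) (x : ℤ → A) (i : ℤ) (l : ℕ) :
    word (shiftZ n x) i l = word x (i + n) l :=
  word_eq_word_iff.2 fun k _ => by simp only [shiftZ, add_right_comm]

theorem shiftZ_natCast (k : ℕ) : shiftZ (A := A) k = shift^[k] := by
  induction k with
  | zero => ext x i; simp [shiftZ]
  | succ k ih => ext x i; simp [← ih, iterate_succ_apply', shiftZ, shift, add_right_comm, add_assoc]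

theorem word_add (x : ℤ → A) (i : ℤ) (k l : ℕ) :
    word x i (k + l) = word x i k ++ word x (i + k) l := by
  simp only [word_eq_ofFn, List.ofFn_add, Fin.val_castLE, Fin.val_natAdd, Nat.cast_add, add_assoc]

theorem word_mem_lang {X : Set (ℤ → A)} {x : ℤ → A} (hx : x ∈ X) (i : ℤ) (l : ℕ) :
    word x i l ∈ lang X :=
  ⟨x, hx, i, by rw [length_word]⟩

theorem exists_append_mem_lang {X : Set (ℤ → A)} {x : ℤ → A} (hx : x ∈ X) {u v : List A} {i : ℤ}
    (k : ℕ) (hu : word x i u.length = u) (hv : word x (i + u.length + k) v.length = v) :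
    ∃ w, u ++ w ++ v ∈ lang X := by
  refine ⟨word x (i + u.length) k, ?_⟩
  have h := word_mem_lang hx i (u.length + k + v.length)
  rwa [word_add, word_add, hu, Nat.cast_add, ← add_assoc, hv] at h

end Words

section LeadsTo

variable {X : Set (ℤ → A)} {m : ℕ}

theorem subset_sftApprox (X : Set (ℤ → A)) (m : ℕ) : X ⊆ sftApprox X m :=
  fun _ hx i => word_mem_lang hx i m

theorem exists_mem_sftApprox_glue {p q : ℤ → A} (hp : p ∈ sftApprox X m) (hq : q ∈ sftApprox X m)
    {a b : ℤ} (h : word p a m = word q b m) :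
    ∃ z ∈ sftApprox X m, (∀ c (l : ℕ), c + l ≤ a + m → word z c l = word p c l) ∧
      ∀ k l : ℕ, word z (a + k) l = word q (b + k) l := by
  set z : ℤ → A := fun i => if i < a then p i else q (i - a + b) with hz
  have hleft : ∀ c (l : ℕ), c + l ≤ a + m → word z c l = word p c l := by
    refine fun c l hc => word_eq_word_iff.2 fun k hk => ?_
    by_cases hka : c + k < a
    · exact if_pos hka
    · have hoverlap := word_eq_word_iff.1 h (c + k - a).toNat (by omega)
      rw [Int.toNat_of_nonneg (by omega), add_sub_cancel] at hoverlap
      rw [hz, hoverlap]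
      simp only [if_neg hka]
      congr 1
      ring
  have hright : ∀ k l : ℕ, word z (a + k) l = word q (b + k) l := by
    refine fun k l => word_eq_word_iff.2 fun r _ => ?_
    simp only [hz]
    rw [if_neg (by omega)]
    congr 1
    ring
  refine ⟨z, fun c => ?_, hleft, hright⟩
  rcases le_total c a with hc | hc
  · rw [hleft c m (by omega)]
    exact hp c
  · obtain ⟨k, rfl⟩ := Int.le.dest hc
    rw [hright]
    exact hq _

/-- `LeadsTo X m u v`: some point of the order-`m` approximation of `X` contains an occurrence of
the length-`m` word `u` and, at the same place or further right, one of `v`. -/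
def LeadsTo (X : Set (ℤ → A)) (m : ℕ) (u v : List A) : Prop :=
  ∃ p ∈ sftApprox X m, ∃ (i : ℤ) (k : ℕ), word p i m = u ∧ word p (i + k) m = v

theorem LeadsTo.trans {u v w : List A} (huv : LeadsTo X m u v) (hvw : LeadsTo X m v w) :
    LeadsTo X m u w := by
  obtain ⟨p, hp, i, k, rfl, rfl⟩ := huv
  obtain ⟨q, hq, j, l, hqv, rfl⟩ := hvw
  obtain ⟨z, hz, hzp, hzq⟩ := exists_mem_sftApprox_glue hp hq hqv.symm
  refine ⟨z, hz, i, k + l, hzp i m (by omega), ?_⟩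
  rw [Nat.cast_add, ← add_assoc, hzq]

instance : IsTrans (List A) (LeadsTo X m) :=
  ⟨fun _ _ _ => LeadsTo.trans⟩

theorem leadsTo_of_word_mem_lang {x : ℤ → A} {i : ℤ} {k : ℕ} (h : word x i (k + m) ∈ lang X) :
    LeadsTo X m (word x i m) (word x (i + k) m) := by
  obtain ⟨y, hy, j, hyx⟩ := h
  rw [length_word, word_eq_word_iff] at hyx
  refine ⟨y, subset_sftApprox X m hy, j, k, word_eq_word_iff.2 fun r hr => hyx r (by omega),
    word_eq_word_iff.2 fun r hr => ?_⟩
  simpa only [Nat.cast_add, add_assoc] using hyx (k + r) (by omega)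

theorem isTransitiveSubshift_sftApprox
    (h : ∀ x ∈ X, ∀ y ∈ X, ∀ i j, LeadsTo X m (word x i m) (word y j m)) :
    IsTransitiveSubshift (sftApprox X m) := by
  rintro u ⟨x, hx, i, hxu⟩ v ⟨y, hy, j, hyv⟩
  obtain ⟨x', hx', i', hxx'⟩ := hx (i + u.length)
  obtain ⟨y', hy', j', hyy'⟩ := hy (j - m)
  rw [length_word] at hxx' hyy'
  obtain ⟨p, hp, a, k, hpx, hpy⟩ := h x' hx' y' hy' i' j'
  obtain ⟨z, hz, hzx, hzp⟩ := exists_mem_sftApprox_glue hx hp (hxx'.symm.trans hpx.symm)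
  have hzy : word z (i + u.length + k) m = word y (j - m) m := by rw [hzp, hpy, hyy']
  obtain ⟨t, ht, htz, hty⟩ := exists_mem_sftApprox_glue hz hy hzy
  refine exists_append_mem_lang ht (i := i) (k + m) ?_ ?_
  · rw [htz _ _ (by omega), hzx _ _ (by omega), hxu]
  · rw [Nat.cast_add, ← add_assoc, hty, sub_add_cancel, hyv]

end LeadsTo

section Mixing

open scoped Topology

variable [TopologicalSpace A]

theorem isHomeomorph_shift : IsHomeomorph (shift : (ℤ → A) → (ℤ → A)) := by
  refine isHomeomorph_iff_exists_inverse.2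
    ⟨by unfold shift; fun_prop, fun x i => x (i - 1), fun x => ?_, fun x => ?_, by fun_prop⟩ <;>
  · ext i
    simp [shift]

theorem eventually_nonempty_inter_preimage_iterate_shift {O O' : Set (ℤ → A)} (hO : IsOpen O)
    (hO' : IsOpen O') (hne : O.Nonempty) (hne' : O'.Nonempty) :
    ∀ᶠ k in atTop, (O ∩ shift^[k] ⁻¹' O').Nonempty := by
  obtain ⟨p, hp⟩ := hne
  obtain ⟨q, hq⟩ := hne'
  obtain ⟨I, u, hu, hI⟩ := isOpen_pi_iff.1 hO p hp
  obtain ⟨J, v, hv, hJ⟩ := isOpen_pi_iff.1 hO' q hq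
  have hdisjoint : ∀ᶠ k : ℕ in atTop, ∀ j ∈ J, j + k ∉ I := by
    rw [← Nat.cofinite_eq_atTop, eventually_all_finset]
    exact fun j _ => ((add_right_injective j).comp Nat.cast_injective).tendsto_cofinite.eventually
      I.eventually_cofinite_notMem
  filter_upwards [hdisjoint] with k hk
  refine ⟨fun i => if i ∈ I then p i else q (i - k), hI fun i hi => ?_, hJ fun j hj => ?_⟩
  · simpa only [if_pos (Finset.mem_coe.1 hi)] using (hu i hi).2
  · simpa only [← shiftZ_natCast, shiftZ, if_neg (hk j hj), add_sub_cancel_right] using (hv j hj).2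

theorem eventually_not_isMeagre_inter_preimage_iterate_shift [BaireSpace (ℤ → A)]
    {S S' : Set (ℤ → A)} (hS : BaireMeasurableSet S) (hS' : BaireMeasurableSet S')
    (hne : ¬ IsMeagre S) (hne' : ¬ IsMeagre S') :
    ∀ᶠ k in atTop, ¬ IsMeagre (S ∩ shift^[k] ⁻¹' S') := by
  obtain ⟨O, hO, hOne, hSO⟩ := exists_isOpen_nonempty_residualEq hS hne
  obtain ⟨O', hO', hOne', hSO'⟩ := exists_isOpen_nonempty_residualEq hS' hne'
  have hcont : Continuous (shift : (ℤ → A) → (ℤ → A)) := isHomeomorph_shift.continuous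
  have hresidual : Tendsto (shift : (ℤ → A) → (ℤ → A)) (residual _) (residual _) :=
    tendsto_residual_of_isOpenMap hcont isHomeomorph_shift.isOpenMap
  filter_upwards [eventually_nonempty_inter_preimage_iterate_shift hO hO' hOne hOne'] with k hk hm
  have hinter : (S ∩ shift^[k] ⁻¹' S' : Set (ℤ → A)) =ᵇ (O ∩ shift^[k] ⁻¹' O' : Set (ℤ → A)) :=
    hSO.inter (hSO'.comp_tendsto (hresidual.iterate k))
  refine not_isMeagre_of_isOpen (hO.inter (hO'.preimage (hcont.iterate k))) hk ?_
  exact eventuallyEq_empty.1 (hinter.symm.trans (eventuallyEq_empty.2 hm))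

end Mixing

section GenericLimitSet

variable [TopologicalSpace A] {f : (ℤ → A) → (ℤ → A)} {X : Set (ℤ → A)} {x : ℤ → A}

theorem isClosed_genLimitSet (f : (ℤ → A) → (ℤ → A)) : IsClosed (genLimitSet f) :=
  isClosed_sInter fun _ hC => hC.1

theorem realm_genLimitSet_mem_residual [SecondCountableTopology A] (f : (ℤ → A) → (ℤ → A)) :
    realm f (genLimitSet f) ∈ residual (ℤ → A) := by
  obtain ⟨T, hTS, hT, hinter⟩ := exists_countable_sInter_eq_of_isClosed
    {C | IsClosed C ∧ realm f C ∈ residual (ℤ → A)} fun C hC => hC.1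
  filter_upwards [(countable_bInter_mem hT).2 fun C hC => (hTS hC).2] with x hx
  rw [genLimitSet, ← hinter]
  exact subset_sInter fun C hC => mem_iInter₂.1 hx C hC

theorem not_isMeagre_setOf_frequently_iterate_mem [SecondCountableTopology A]
    (hx : x ∈ genLimitSet f) {U : Set (ℤ → A)} (hU : IsOpen U) (hxU : x ∈ U) :
    ¬ IsMeagre {y | ∃ᶠ t in atTop, f^[t] y ∈ U} := by
  intro hmeagre
  have hrealm : realm f (genLimitSet f \ U) ∈ residual (ℤ → A) := by
    filter_upwards [realm_genLimitSet_mem_residual f, hmeagre] with y hy hyU z hz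
    exact ⟨hy hz, fun hzU => hyU (hz.frequently (hU.mem_nhds hzU))⟩
  exact (hx _ ⟨(isClosed_genLimitSet f).sdiff hU, hrealm⟩).2 hxU

theorem eventually_exists_mem_realm_frequently [SecondCountableTopology A] [BaireSpace (ℤ → A)]
    (hf : IsCA f) {y z : ℤ → A} (hy : y ∈ genLimitSet f) (hz : z ∈ genLimitSet f)
    {U V : Set (ℤ → A)} (hU : IsOpen U) (hV : IsOpen V) (hyU : y ∈ U) (hzV : z ∈ V) :
    ∀ᶠ k in atTop, ∃ x ∈ realm f (genLimitSet f),
      (∃ᶠ t in atTop, f^[t] x ∈ U) ∧ ∃ᶠ t in atTop, shift^[k] (f^[t] x) ∈ V := by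
  have hcomm : Function.Commute f shift := semiconj_iff_comp_eq.2 hf.2
  filter_upwards [eventually_not_isMeagre_inter_preimage_iterate_shift
    (baireMeasurableSet_setOf_frequently_iterate_mem hf.1 hU)
    (baireMeasurableSet_setOf_frequently_iterate_mem hf.1 hV)
    (not_isMeagre_setOf_frequently_iterate_mem hy hU hyU)
    (not_isMeagre_setOf_frequently_iterate_mem hz hV hzV)] with k hk
  by_contra hnone
  refine hk (mem_of_superset (realm_genLimitSet_mem_residual f) fun x hx hxUV => ?_)
  exact hnone ⟨x, hx, hxUV.1, hxUV.2.mono fun t ht => (hcomm.iterate_iterate t k).eq x ▸ ht⟩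

theorem eventually_iterate_mem_of_mem_realm [CompactSpace A] {U : Set (ℤ → A)}
    (hx : x ∈ realm f X) (hU : IsOpen U) (hXU : X ⊆ U) : ∀ᶠ t in atTop, f^[t] x ∈ U := by
  by_contra hnot
  obtain ⟨y, hyU, hy⟩ :=
    hU.isClosed_compl.isCompact.exists_mapClusterPt_of_frequently (not_eventually.1 hnot)
  exact hyU (hXU (hx hy))

end GenericLimitSet

section WindowDynamics

variable [TopologicalSpace A] [DiscreteTopology A] {f : (ℤ → A) → (ℤ → A)} {X : Set (ℤ → A)}
  {x : ℤ → A}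

theorem isLocallyConstant_word (i : ℤ) (l : ℕ) :
    IsLocallyConstant fun x : ℤ → A => word x i l := by
  have hwindow : IsLocallyConstant fun (x : ℤ → A) (k : Fin l) => x (i + k) :=
    (IsLocallyConstant.iff_continuous _).2 (by fun_prop)
  simpa only [word_eq_ofFn] using! hwindow.comp List.ofFn

theorem eventually_leadsTo_word [CompactSpace A] (hx : x ∈ realm f X) {i j : ℤ} (hij : i ≤ j)
    (m : ℕ) : ∀ᶠ t in atTop, LeadsTo X m (word (f^[t] x) i m) (word (f^[t] x) j m) := by
  obtain ⟨k, rfl⟩ := Int.le.dest hij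
  exact (eventually_iterate_mem_of_mem_realm hx (isLocallyConstant_word i (k + m) (lang X))
    fun _ hy => word_mem_lang hy i (k + m)).mono fun _ => leadsTo_of_word_mem_lang

theorem eventually_word_iterate_succ [CompactSpace A] (hf : Continuous f) {n : ℤ}
    (hres : ∀ y ∈ X, f y = shiftZ n y) (hx : x ∈ realm f X) (i : ℤ) (l : ℕ) :
    ∀ᶠ t in atTop, word (f^[t + 1] x) i l = word (f^[t] x) (i + n) l := by
  simp only [iterate_succ_apply']
  have hconst : IsLocallyConstant fun y : ℤ → A => (word (f y) i l, word y (i + n) l) :=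
    ((isLocallyConstant_word i l).comp_continuous hf).prodMk (isLocallyConstant_word (i + n) l)
  refine eventually_iterate_mem_of_mem_realm hx (hconst {w | w.1 = w.2}) fun y hy => ?_
  simp only [mem_preimage, mem_ofPred_eq, hres y hy, word_shiftZ]

theorem eventually_exists_mem_realm_frequently_word_eq [SecondCountableTopology A]
    [BaireSpace (ℤ → A)] (hf : IsCA f) {y z : ℤ → A} (hy : y ∈ genLimitSet f)
    (hz : z ∈ genLimitSet f) (i j : ℤ) (l : ℕ) :
    ∀ᶠ k : ℕ in atTop, ∃ x ∈ realm f (genLimitSet f),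
      (∃ᶠ t in atTop, word (f^[t] x) i l = word y i l) ∧
        ∃ᶠ t in atTop, word (f^[t] x) (j + k) l = word z j l := by
  simp only [← word_shiftZ, shiftZ_natCast]
  exact eventually_exists_mem_realm_frequently hf hy hz
    ((isLocallyConstant_word i l).isOpen_fiber _) ((isLocallyConstant_word j l).isOpen_fiber _)
    rfl rfl

theorem exists_leadsTo_word_iterate [CompactSpace A] (hf : Continuous f) {n : ℤ} (hn : n ≠ 0)
    (hres : ∀ y ∈ X, f y = shiftZ n y) (hx : x ∈ realm f X) (i : ℤ) (m : ℕ) {P Q : ℕ → Prop}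
    (hP : ∃ᶠ t in atTop, P t) (hQ : ∃ᶠ t in atTop, Q t) :
    ∃ s t, P s ∧ Q t ∧ LeadsTo X m (word (f^[s] x) i m) (word (f^[t] x) i m) := by
  have hstep := eventually_word_iterate_succ hf hres hx i m
  rcases hn.lt_or_gt with hneg | hpos
  · have hback : ∀ᶠ t in atTop, LeadsTo X m (word (f^[t + 1] x) i m) (word (f^[t] x) i m) := by
      filter_upwards [hstep, eventually_leadsTo_word hx (i := i + n) (j := i) (by omega) m]
        with t ht hlead
      rwa [ht]
    obtain ⟨t, s, hQt, hPs, hlead⟩ := exists_rel_of_eventually_rel_succ (swap (LeadsTo X m))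
      (w := fun t => word (f^[t] x) i m) hback hQ hP
    exact ⟨s, t, hPs, hQt, hlead⟩
  · refine exists_rel_of_eventually_rel_succ (LeadsTo X m) ?_ hP hQ
    filter_upwards [hstep, eventually_leadsTo_word hx (i := i) (j := i + n) (by omega) m]
      with t ht hlead
    rwa [ht]

end WindowDynamics

/-- if the restriction of `f` to `ω̃(f)` equals the restriction of a shift
map `σ^n` with `n ≠ 0`, then `ω̃(f)` is chain transitive. -/
theorem stmt12 [Fintype A] [Nonempty A] [TopologicalSpace A] [DiscreteTopology A]
    (f : (ℤ → A) → (ℤ → A)) (hf : IsCA f) (n : ℤ) (hn : n ≠ 0)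
    (hres : ∀ x ∈ genLimitSet f, f x = shiftZ n x) :
    ChainTransitive (genLimitSet f) := by
  refine fun m => isTransitiveSubshift_sftApprox fun y hy z hz i j => ?_
  have hvisit := eventually_exists_mem_realm_frequently_word_eq hf hy hz i j m
  obtain ⟨k, ⟨x, hx, hxy, hxz⟩, hk⟩ := (hvisit.and (eventually_ge_atTop (i - j).toNat)).exists
  have hrow := eventually_leadsTo_word hx (i := i) (j := j + k) (by omega) m
  obtain ⟨s, t, hs, ⟨ht, hst⟩, htime⟩ :=
    exists_leadsTo_word_iterate hf.1 hn hres hx i m hxy (hxz.and_eventually hrow)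
  rw [← hs, ← ht]
  exact htime.trans hst

end Gls
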